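/- arXiv:0706.1545 — 6 statements merged into one kernel-verified Lean document; each statement's English description precedes it below -/
import Mathlib

section
/- Let n ≥ 1 and t₁ ∈ ℝ. Let g : ℝ → Matrix (Fin n) (Fin n) ℝ be twice differentiable with g(t) invertible for all t, let I₀ : ℝ → (Matrix (Fin n) (Fin n) ℝ →ₗ[ℝ] Matrix (Fin n) (Fin n) ℝ) be differentiable, and let J₀ : ℝ → Matrix (Fin n) (Fin n) ℝ be differentiable. Set ξ(t) := g(t)⁻¹ * g'(t) and Π(t) := I₀(t)(ξ(t)) + J₀(t). Then the following are equivalent: (i) the curve t ↦ g(t) * Π(t) * g(t)⁻¹ is constant; (ii) for all t, [ξ(t), I₀(t)(ξ(t)) + J₀(t)] + (I₀'(t))(ξ(t)) + I₀(t)(ξ'(t)) + J₀'(t) = 0. Moreover, if these hold and g(t₁) * Π(t₁) * g(t₁)⁻¹ = μ, then g(t) * Π(t) * g(t)⁻¹ = μ for all t. -/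
open Matrix

attribute [local instance] Matrix.linftyOpNormedAddCommGroup Matrix.linftyOpNormedRing
  Matrix.linftyOpNormedAlgebra

theorem HasDerivAt.clm_apply_add {E F : Type*} [NormedAddCommGroup E] [NormedSpace ℝ E]
    [NormedAddCommGroup F] [NormedSpace ℝ F] {L : ℝ → E →L[ℝ] F} {x : ℝ → E} {y : ℝ → F}
    {L' : E →L[ℝ] F} {x' : E} {y' : F} {t : ℝ} (hL : HasDerivAt L L' t)
    (hx : HasDerivAt x x' t) (hy : HasDerivAt y y' t) :
    HasDerivAt (fun s => L s (x s) + y s) (L' (x t) + L t x' + y') t :=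
  (hL.clm_apply hx).add hy

section NormedAlgebra

variable {A : Type*} [NormedRing A] [NormedAlgebra ℝ A] [HasSummableGeomSeries A]

theorem HasDerivAt.ringInverse {g : ℝ → A} {g' : A} {t : ℝ} (hg : HasDerivAt g g' t)
    (hu : IsUnit (g t)) :
    HasDerivAt (fun s => Ring.inverse (g s))
      (-(Ring.inverse (g t) * g' * Ring.inverse (g t))) t := by
  obtain ⟨u, hu⟩ := hu
  have h := hasFDerivAt_ringInverse (𝕜 := ℝ) u
  rw [hu] at h
  simpa [← hu, Function.comp_def] using h.comp_hasDerivAt t hg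

/-- Differentiating a conjugated curve `g P g⁻¹` in terms of the body velocity `g⁻¹ g'`. -/
theorem HasDerivAt.conj_ringInverse {g P : ℝ → A} {g' P' : A} {t : ℝ}
    (hg : HasDerivAt g g' t) (hP : HasDerivAt P P' t) (hu : IsUnit (g t)) :
    HasDerivAt (fun s => g s * P s * Ring.inverse (g s))
      (g t * (Ring.inverse (g t) * g' * P t - P t * (Ring.inverse (g t) * g') + P') *
        Ring.inverse (g t)) t := by
  refine ((hg.mul hP).mul (hg.ringInverse hu)).congr_deriv ?_
  have h : g t * (Ring.inverse (g t) * g' * P t) = g' * P t := by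
    rw [← mul_assoc, Ring.mul_inverse_cancel_left _ _ hu]
  rw [mul_add, mul_sub, h]
  simp only [Pi.mul_apply]
  noncomm_ring

/-- With body velocity `ξ = g⁻¹ g'`, the conjugated curve `g P g⁻¹` is constant iff
`[ξ, P] + P' = 0`. -/
theorem conj_ringInverse_const_iff {g P P' ξ : ℝ → A} (hg : Differentiable ℝ g)
    (hP : ∀ t, HasDerivAt P (P' t) t) (hu : ∀ t, IsUnit (g t))
    (hξ : ∀ t, ξ t = Ring.inverse (g t) * deriv g t) :
    (∀ s t, g s * P s * Ring.inverse (g s) = g t * P t * Ring.inverse (g t)) ↔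
      ∀ t, ξ t * P t - P t * ξ t + P' t = 0 := by
  have key t := (hg t).hasDerivAt.conj_ringInverse (hP t) (hu t)
  simp only [← hξ] at key
  constructor
  · intro h t
    have hconst : (fun s => g s * P s * Ring.inverse (g s)) =
        fun _ => g t * P t * Ring.inverse (g t) := funext fun s => h s t
    have h0 := (key t).unique (hconst ▸ hasDerivAt_const t _)
    rwa [(hu t).ringInverse.mul_left_eq_zero, (hu t).mul_right_eq_zero] at h0
  · intro h
    refine is_const_of_deriv_eq_zero (fun t => (key t).differentiableAt) fun t => ?_
    rw [(key t).deriv, h t, mul_zero, zero_mul]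

end NormedAlgebra

/-- Matrix form of Proposition (J-1): with body velocity `ξ = g⁻¹ g'`, time-dependent
locked inertia tensor `I₀(t)` and internal momentum `J₀(t)`, and body momentum
`Π = I₀ ξ + J₀` (here `Mom`), the spatial momentum `g Π g⁻¹` is constant iff
`[ξ, I₀ ξ + J₀] + I₀' ξ + I₀ ξ' + J₀' = 0`; moreover in that case, if the spatial
momentum equals `μ` at `t₁`, it equals `μ` for all times. -/
theorem momentum_equation_equiv {n : ℕ} (hn : 1 ≤ n) (t₁ : ℝ)
    (g : ℝ → Matrix (Fin n) (Fin n) ℝ)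
    (hg : Differentiable ℝ g) (hg' : Differentiable ℝ (deriv g))
    (hinv : ∀ t, IsUnit (g t))
    (I₀ : ℝ → (Matrix (Fin n) (Fin n) ℝ →L[ℝ] Matrix (Fin n) (Fin n) ℝ))
    (hI₀ : Differentiable ℝ I₀)
    (J₀ : ℝ → Matrix (Fin n) (Fin n) ℝ) (hJ₀ : Differentiable ℝ J₀)
    (ξ Mom : ℝ → Matrix (Fin n) (Fin n) ℝ)
    (hξ : ∀ t, ξ t = (g t)⁻¹ * deriv g t)
    (hMomdef : ∀ t, Mom t = I₀ t (ξ t) + J₀ t)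
    (μ : Matrix (Fin n) (Fin n) ℝ) :
    ((∀ s t, g s * Mom s * (g s)⁻¹ = g t * Mom t * (g t)⁻¹) ↔
      (∀ t, (ξ t * (I₀ t (ξ t) + J₀ t) - (I₀ t (ξ t) + J₀ t) * ξ t)
          + (deriv I₀ t) (ξ t) + I₀ t (deriv ξ t) + deriv J₀ t = 0)) ∧
    ((∀ s t, g s * Mom s * (g s)⁻¹ = g t * Mom t * (g t)⁻¹) →
      g t₁ * Mom t₁ * (g t₁)⁻¹ = μ → ∀ t, g t * Mom t * (g t)⁻¹ = μ) := by
  refine ⟨?_, fun h h₁ t => (h t t₁).trans h₁⟩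
  simp only [nonsing_inv_eq_ringInverse] at hξ ⊢
  have hξd : Differentiable ℝ ξ := by
    rw [funext hξ]
    exact fun t => ((hg t).hasDerivAt.ringInverse (hinv t)).differentiableAt.mul (hg' t)
  have hMom t : HasDerivAt Mom (deriv I₀ t (ξ t) + I₀ t (deriv ξ t) + deriv J₀ t) t := by
    rw [funext hMomdef]
    exact HasDerivAt.clm_apply_add (E := Matrix (Fin n) (Fin n) ℝ)
      (F := Matrix (Fin n) (Fin n) ℝ) (L := I₀) (L' := deriv I₀ t)
      (hI₀ t).hasDerivAt (hξd t).hasDerivAt (hJ₀ t).hasDerivAt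
  have hiff := conj_ringInverse_const_iff hg hMom hinv hξ
  simpa only [hMomdef, add_assoc] using hiff
end

section
/- Let m, I, R be real numbers with m > 0, I > 0, R > 0, let t₁ ∈ ℝ, let x, y, θ : ℝ → ℝ be twice differentiable and φ : ℝ → ℝ be differentiable, and suppose that for all t: (i) x'(t) = R·θ'(t)·cos(φ(t)) and y'(t) = R·θ'(t)·sin(φ(t)) (the non-sliding constraints), and (ii) m·R·(x''(t)·cos(φ(t)) + y''(t)·sin(φ(t))) + I·θ''(t) = 0 (the nonholonomic momentum equation). Then θ''(t) = 0 for all t, and for all t: θ(t) = θ(t₁) + θ'(t₁)·(t − t₁), x(t) = x(t₁) + R·θ'(t₁)·∫_{t₁}^{t} cos(φ(s)) ds, and y(t) = y(t₁) + R·θ'(t₁)·∫_{t₁}^{t} sin(φ(s)) ds. -/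
/-- A function whose derivative is a constant multiple of a continuous function is recovered
by quadrature. -/
theorem eq_add_const_mul_integral_of_deriv_eq {f g : ℝ → ℝ} {c : ℝ} (hf : Differentiable ℝ f)
    (hg : Continuous g) (h : ∀ t, deriv f t = c * g t) (a t : ℝ) :
    f t = f a + c * ∫ s in a..t, g s := by
  have hint : ∫ s in a..t, c * g s = f t - f a :=
    intervalIntegral.integral_eq_sub_of_hasDerivAt (fun s _ => h s ▸ (hf s).hasDerivAt)
      ((hg.const_mul c).intervalIntegrable a t)
  rw [intervalIntegral.integral_const_mul] at hint
  linarith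

/-- The base-controlled vertically rolling disk: the non-sliding constraints together with
the nonholonomic momentum equation force `θ'' = 0`, and the group variables `(x, y, θ)` are
induced from the controlled heading `φ(t)` by explicit quadratures. -/
theorem rolling_disk (m I R t₁ : ℝ) (hm : 0 < m) (hI : 0 < I) (hR : 0 < R)
    (x y θ φ : ℝ → ℝ)
    (hx : Differentiable ℝ x) (hx' : Differentiable ℝ (deriv x))
    (hy : Differentiable ℝ y) (hy' : Differentiable ℝ (deriv y))
    (hθ : Differentiable ℝ θ) (hθ' : Differentiable ℝ (deriv θ))
    (hφ : Differentiable ℝ φ)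
    (hcx : ∀ t, deriv x t = R * deriv θ t * Real.cos (φ t))
    (hcy : ∀ t, deriv y t = R * deriv θ t * Real.sin (φ t))
    (hmom : ∀ t, m * R * (deriv (deriv x) t * Real.cos (φ t)
        + deriv (deriv y) t * Real.sin (φ t)) + I * deriv (deriv θ) t = 0) :
    (∀ t, deriv (deriv θ) t = 0) ∧
    (∀ t, θ t = θ t₁ + deriv θ t₁ * (t - t₁)
      ∧ x t = x t₁ + R * deriv θ t₁ * ∫ s in t₁..t, Real.cos (φ s)
      ∧ y t = y t₁ + R * deriv θ t₁ * ∫ s in t₁..t, Real.sin (φ s)) := by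
  have hθ'' : ∀ t, deriv (deriv θ) t = 0 := by
    intro t
    have hω := ((hθ' t).hasDerivAt).const_mul R
    have hxx : deriv (deriv x) t = R * deriv (deriv θ) t * Real.cos (φ t)
        + R * deriv θ t * (-Real.sin (φ t) * deriv φ t) := by
      rw [funext hcx]
      exact (hω.mul (hφ t).hasDerivAt.cos).deriv
    have hyy : deriv (deriv y) t = R * deriv (deriv θ) t * Real.sin (φ t)
        + R * deriv θ t * (Real.cos (φ t) * deriv φ t) := by
      rw [funext hcy]
      exact (hω.mul (hφ t).hasDerivAt.sin).deriv
    have hmom_t := hmom t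
    rw [hxx, hyy] at hmom_t
    have hprod : (m * R ^ 2 + I) * deriv (deriv θ) t = 0 := by
      linear_combination
        hmom_t - m * R ^ 2 * deriv (deriv θ) t * Real.sin_sq_add_cos_sq (φ t)
    exact (mul_eq_zero.mp hprod).resolve_left (by positivity)
  have hconst : ∀ t, deriv θ t = deriv θ t₁ := fun t => is_const_of_deriv_eq_zero hθ' hθ'' t t₁
  refine ⟨hθ'', fun t => ⟨?_, ?_, ?_⟩⟩
  · simpa using eq_add_const_mul_integral_of_deriv_eq (g := fun _ => 1) (c := deriv θ t₁) hθ
      continuous_const (fun s => by rw [hconst s, mul_one]) t₁ t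
  · exact eq_add_const_mul_integral_of_deriv_eq hx (Real.continuous_cos.comp hφ.continuous)
      (fun s => by rw [hcx s, hconst s]; rfl) t₁ t
  · exact eq_add_const_mul_integral_of_deriv_eq hy (Real.continuous_sin.comp hφ.continuous)
      (fun s => by rw [hcy s, hconst s]; rfl) t₁ t
end

section
/- Let n ≥ 1, let g : ℝ → Matrix (Fin n) (Fin n) ℝ be twice differentiable with g(t) invertible for all t, and let ξ₀ ∈ Matrix (Fin n) (Fin n) ℝ be a fixed matrix. Then for every t: trace( (d/dt (g⁻¹ * g'))(t) * (g(t)⁻¹ * ξ₀ * g(t)) ) = (d/dt (fun s => trace (g'(s) * g(s)⁻¹ * ξ₀)))(t). Consequently, trace((d/dt(g⁻¹ * g'))(t) * g(t)⁻¹ * ξ₀ * g(t)) = 0 for all t if and only if the function t ↦ trace(g'(t) * g(t)⁻¹ * ξ₀) is constant. -/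
open Matrix

attribute [local instance] Matrix.linftyOpNormedAddCommGroup Matrix.linftyOpNormedRing
  Matrix.linftyOpNormedAlgebra

/-- Derivative of the inverse of a curve of invertible matrices. -/
theorem HasDerivAt.matrix_inv {n : ℕ} {g : ℝ → Matrix (Fin n) (Fin n) ℝ}
    {g' : Matrix (Fin n) (Fin n) ℝ} {t : ℝ} (hg : HasDerivAt g g' t) (hu : IsUnit (g t)) :
    HasDerivAt (fun s => (g s)⁻¹) (-((g t)⁻¹ * g' * (g t)⁻¹)) t := by
  have : CompleteSpace (Matrix (Fin n) (Fin n) ℝ) := FiniteDimensional.complete ℝ _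
  obtain ⟨u, hu⟩ := hu
  have h := hasFDerivAt_ringInverse (𝕜 := ℝ) u
  rw [hu] at h
  have h2 := h.comp_hasDerivAt t hg
  have hui : ((u⁻¹ : (Matrix (Fin n) (Fin n) ℝ)ˣ) : Matrix (Fin n) (Fin n) ℝ) = (g t)⁻¹ := by
    rw [← hu, Matrix.coe_units_inv]
  simp only [Function.comp_def, ← Matrix.nonsing_inv_eq_ringInverse, hui, _root_.neg_apply,
    ContinuousLinearMap.mulLeftRight_apply] at h2
  exact h2

/-- The trace commutes with differentiation of curves of matrices. -/
theorem HasDerivAt.matrix_trace {n : ℕ} {f : ℝ → Matrix (Fin n) (Fin n) ℝ}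
    {f' : Matrix (Fin n) (Fin n) ℝ} {t : ℝ} (hf : HasDerivAt f f' t) :
    HasDerivAt (fun s => Matrix.trace (f s)) (Matrix.trace f') t :=
  (LinearMap.toContinuousLinearMap
    (Matrix.traceLinearMap (Fin n) ℝ ℝ)).hasFDerivAt.comp_hasDerivAt t hf

/-- For a twice differentiable curve `g(t)` of invertible matrices and a fixed matrix `ξ₀`,
`trace((d/dt (g⁻¹ g')) · g⁻¹ ξ₀ g) = d/dt trace(g' g⁻¹ ξ₀)`; consequently the nonholonomic
momentum equation `trace((d/dt(g⁻¹g')) g⁻¹ ξ₀ g) = 0` holds for all `t` iff the spatial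
quantity `trace(g' g⁻¹ ξ₀)` is constant. -/
theorem trace_momentum_identity {n : ℕ} (hn : 1 ≤ n)
    (g : ℝ → Matrix (Fin n) (Fin n) ℝ)
    (hg : Differentiable ℝ g) (hg' : Differentiable ℝ (deriv g))
    (hinv : ∀ t, IsUnit (g t)) (ξ₀ : Matrix (Fin n) (Fin n) ℝ) :
    (∀ t, Matrix.trace (deriv (fun s => (g s)⁻¹ * deriv g s) t * ((g t)⁻¹ * ξ₀ * g t))
        = deriv (fun s => Matrix.trace (deriv g s * (g s)⁻¹ * ξ₀)) t) ∧
    ((∀ t, Matrix.trace (deriv (fun s => (g s)⁻¹ * deriv g s) t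
          * ((g t)⁻¹ * ξ₀ * g t)) = 0) ↔
      ∀ s t, Matrix.trace (deriv g s * (g s)⁻¹ * ξ₀)
          = Matrix.trace (deriv g t * (g t)⁻¹ * ξ₀)) := by
  have hinv' := fun t => (hg t).hasDerivAt.matrix_inv (hinv t)
  have hspatial := fun t =>
    (((hg' t).hasDerivAt.mul (hinv' t)).mul_const ξ₀).matrix_trace
  have hbody := fun t => (hinv' t).mul (hg' t).hasDerivAt
  have key : ∀ t, Matrix.trace (deriv (fun s => (g s)⁻¹ * deriv g s) t * ((g t)⁻¹ * ξ₀ * g t))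
      = deriv (fun s => Matrix.trace (deriv g s * (g s)⁻¹ * ξ₀)) t := by
    intro t
    have hdet : IsUnit (g t).det := (Matrix.isUnit_iff_isUnit_det _).mp (hinv t)
    refine Eq.trans ?_ (hspatial t).deriv.symm
    refine (congrArg (fun A => Matrix.trace (A * ((g t)⁻¹ * ξ₀ * g t))) (hbody t).deriv).trans ?_
    rw [← Matrix.mul_assoc, Matrix.trace_mul_comm]
    congr 1
    simp only [Matrix.mul_add, Matrix.add_mul, Matrix.mul_neg, Matrix.neg_mul,
      Matrix.mul_assoc, Matrix.mul_nonsing_inv_cancel_left _ _ hdet]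
    exact add_comm _ _
  refine ⟨key, fun h s t => ?_, fun h t => ?_⟩
  · exact is_const_of_deriv_eq_zero (fun t => (hspatial t).differentiableAt)
      (fun t => (key t).symm.trans (h t)) s t
  · rw [key t, funext fun s => h s t, deriv_const]
end

section
/- Let γ ∈ ℝ and t₁ ∈ ℝ. Let B : ℝ → (Fin 3 → ℝ) be continuous, let J : ℝ → (Fin 3 → ℝ) be differentiable with J'(t) = γ • (J(t) ×₃ B(t)) for all t (where ×₃ is the cross product on ℝ³), and let h : ℝ → ((Fin 3 → ℝ) →L[ℝ] (Fin 3 → ℝ)) be differentiable with h(t₁) = id and h'(t) = L(−γ • B(t)) ∘ h(t) for all t, where L(ω) denotes the linear map v ↦ ω ×₃ v. Then J(t) = h(t)(J(t₁)) for all t. -/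
open Matrix

/-- A curve `d` in `ℝ³` with `d' = ω ×₃ d` has constant length. -/
theorem dotProduct_self_eq_of_hasDerivAt_cross {ω d : ℝ → (Fin 3 → ℝ)}
    (hd : ∀ t, HasDerivAt d (crossProduct (ω t) (d t)) t) (s t : ℝ) :
    d s ⬝ᵥ d s = d t ⬝ᵥ d t := by
  have hderiv : ∀ u, HasDerivAt (fun u => d u ⬝ᵥ d u) 0 u := by
    intro u
    have hcoord := hasDerivAt_pi.1 (hd u)
    have hsum := HasDerivAt.fun_sum (u := Finset.univ)
      fun i _ => (hcoord i).fun_mul (hcoord i)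
    refine hsum.congr_deriv ?_
    rw [Finset.sum_add_distrib]
    change crossProduct (ω u) (d u) ⬝ᵥ d u + d u ⬝ᵥ crossProduct (ω u) (d u) = 0
    rw [dotProduct_comm, dot_cross_self, add_zero]
  exact is_const_of_deriv_eq_zero (fun u => (hderiv u).differentiableAt)
    (fun u => (hderiv u).deriv) s t

/-- The dipolar torque equation `J' = γ J × B` is solved by the Larmor rotation:
if `h` solves `h' = L(−γB) ∘ h` with `h(t₁) = id`, where `L(ω) v = ω ×₃ v`,
then `J(t) = h(t) (J(t₁))` for all `t`. -/
theorem larmor_rotation (γ t₁ : ℝ) (B : ℝ → (Fin 3 → ℝ)) (hB : Continuous B)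
    (J : ℝ → (Fin 3 → ℝ)) (hJ : Differentiable ℝ J)
    (hJ' : ∀ t, deriv J t = γ • crossProduct (J t) (B t))
    (h : ℝ → ((Fin 3 → ℝ) →L[ℝ] (Fin 3 → ℝ)))
    (hh : Differentiable ℝ h)
    (hh₁ : h t₁ = ContinuousLinearMap.id ℝ (Fin 3 → ℝ))
    (hh' : ∀ t, deriv h t
      = (LinearMap.toContinuousLinearMap (crossProduct ((-γ) • B t))).comp (h t)) :
    ∀ t, J t = h t (J t₁) := by
  have hd : ∀ t, HasDerivAt (fun t => J t - h t (J t₁))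
      (crossProduct ((-γ) • B t) (J t - h t (J t₁))) t := by
    intro t
    refine ((hJ t).hasDerivAt.sub
      ((hh t).hasDerivAt.clm_apply (hasDerivAt_const t (J t₁)))).congr_deriv ?_
    rw [hJ', hh', ContinuousLinearMap.comp_apply, LinearMap.coe_toContinuousLinearMap', map_zero,
      add_zero, ← cross_anticomm (B t) (J t)]
    simp only [map_smul, map_sub, LinearMap.smul_apply]
    module
  intro t
  have hconst := dotProduct_self_eq_of_hasDerivAt_cross hd t t₁
  simp only [hh₁, ContinuousLinearMap.id_apply, sub_self, zero_dotProduct] at hconst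
  exact sub_eq_zero.1 (dotProduct_self_eq_zero.1 hconst)
end

section
/- Let n ≥ 1. Let P : Matrix (Fin n) (Fin n) ℝ →ₗ[ℝ] Matrix (Fin n) (Fin n) ℝ be a linear projector (P ∘ P = P). Let g, h : ℝ → Matrix (Fin n) (Fin n) ℝ be differentiable with g(t) and h(t) invertible for all t, suppose h'(t) = P(g'(t) * g(t)⁻¹) * h(t) for all t (the dynamic-phase equation), and suppose the equivariance property P(h(t)⁻¹ * X * h(t)) = h(t)⁻¹ * P(X) * h(t) holds for all t and all matrices X. Then the curve g_G(t) := h(t)⁻¹ * g(t) is differentiable and horizontal: P(g_G'(t) * g_G(t)⁻¹) = 0 for all t; in particular g(t) = h(t) * g_G(t) factorizes g into a dynamic phase h and a geometric (horizontal) phase g_G. -/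
open Matrix

attribute [local instance] Matrix.linftyOpNormedAddCommGroup Matrix.linftyOpNormedRing
  Matrix.linftyOpNormedAlgebra

/-- The inverse of a differentiable curve of invertible matrices is differentiable. -/
theorem differentiable_matrix_inv {n : ℕ} {h : ℝ → Matrix (Fin n) (Fin n) ℝ}
    (hh : Differentiable ℝ h) (hhinv : ∀ t, IsUnit (h t)) :
    Differentiable ℝ (fun t => (h t)⁻¹) := by
  have : CompleteSpace (Matrix (Fin n) (Fin n) ℝ) := FiniteDimensional.complete ℝ _
  simp only [Matrix.nonsing_inv_eq_ringInverse]
  exact fun t => (differentiableAt_inverse (𝕜 := ℝ) (hhinv t)).comp t (hh t)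

/-- Dynamic/geometric phase factorization: if the dynamic phase `h` solves
`h' = P(g' g⁻¹) h` for a projector `P` commuting with conjugation by `h`, then
`g_G := h⁻¹ g` is differentiable and horizontal (`P(g_G' g_G⁻¹) = 0`), so that
`g = h · g_G` factorizes `g` into a dynamic and a geometric phase. -/
theorem phase_factorization {n : ℕ} (hn : 1 ≤ n)
    (P : Matrix (Fin n) (Fin n) ℝ →ₗ[ℝ] Matrix (Fin n) (Fin n) ℝ)
    (hP : P ∘ₗ P = P)
    (g h : ℝ → Matrix (Fin n) (Fin n) ℝ)
    (hg : Differentiable ℝ g) (hh : Differentiable ℝ h)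
    (hginv : ∀ t, IsUnit (g t)) (hhinv : ∀ t, IsUnit (h t))
    (hdyn : ∀ t, deriv h t = P (deriv g t * (g t)⁻¹) * h t)
    (hequiv : ∀ t (X : Matrix (Fin n) (Fin n) ℝ),
      P ((h t)⁻¹ * X * h t) = (h t)⁻¹ * P X * h t) :
    Differentiable ℝ (fun t => (h t)⁻¹ * g t) ∧
    (∀ t, P (deriv (fun s => (h s)⁻¹ * g s) t * ((h t)⁻¹ * g t)⁻¹) = 0) := by
  have hk : Differentiable ℝ (fun t => (h t)⁻¹ * g t) :=
    (differentiable_matrix_inv hh hhinv).mul hg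
  refine ⟨hk, fun t => ?_⟩
  have hdet_h : IsUnit (h t).det := (Matrix.isUnit_iff_isUnit_det _).mp (hhinv t)
  have hdet_g : IsUnit (g t).det := (Matrix.isUnit_iff_isUnit_det _).mp (hginv t)
  have hfac : (fun s => h s * ((h s)⁻¹ * g s)) = g := funext fun s =>
    Matrix.mul_nonsing_inv_cancel_left _ _ ((Matrix.isUnit_iff_isUnit_det _).mp (hhinv s))
  have hleibniz : deriv g t =
      deriv h t * ((h t)⁻¹ * g t) + h t * deriv (fun s => (h s)⁻¹ * g s) t := by
    have hprod := ((hh t).hasDerivAt.mul (hk t).hasDerivAt).deriv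
    change deriv (fun s => h s * ((h s)⁻¹ * g s)) t = _ at hprod
    rwa [hfac] at hprod
  have hderiv : deriv (fun s => (h s)⁻¹ * g s) t =
      (h t)⁻¹ * (deriv g t - P (deriv g t * (g t)⁻¹) * g t) := by
    rw [hdyn t, Matrix.mul_assoc, Matrix.mul_nonsing_inv_cancel_left _ _ hdet_h] at hleibniz
    rw [← Matrix.nonsing_inv_mul_cancel_left (h t) (deriv (fun s => (h s)⁻¹ * g s) t) hdet_h,
      ← eq_sub_of_add_eq' hleibniz.symm]
  have hvel : deriv (fun s => (h s)⁻¹ * g s) t * ((h t)⁻¹ * g t)⁻¹ =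
      (h t)⁻¹ * (deriv g t * (g t)⁻¹ - P (deriv g t * (g t)⁻¹)) * h t := by
    rw [hderiv, Matrix.mul_inv_rev, Matrix.nonsing_inv_nonsing_inv _ hdet_h, ← Matrix.mul_assoc,
      Matrix.mul_assoc (h t)⁻¹, Matrix.sub_mul, Matrix.mul_nonsing_inv_cancel_right _ _ hdet_g]
  have hidem : P (P (deriv g t * (g t)⁻¹)) = P (deriv g t * (g t)⁻¹) :=
    LinearMap.congr_fun hP _
  rw [hvel, hequiv, map_sub, hidem, sub_self, Matrix.mul_zero, Matrix.zero_mul]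
end

section
/- Let n ≥ 1 and write ⟨X, Y⟩ := trace(X * Y) for X, Y ∈ Matrix (Fin n) (Fin n) ℝ. Let I₀ : ℝ → (Matrix (Fin n) (Fin n) ℝ ≃ₗ[ℝ] Matrix (Fin n) (Fin n) ℝ) be differentiable with each I₀(t) symmetric for the trace pairing (⟨I₀(t) X, Y⟩ = ⟨I₀(t) Y, X⟩ for all X, Y), let J₀ : ℝ → Matrix (Fin n) (Fin n) ℝ and K_int : ℝ → ℝ be differentiable, let Π : ℝ → Matrix (Fin n) (Fin n) ℝ be differentiable with Π'(t) = [Π(t), I₀(t)⁻¹(Π(t) − J₀(t))] for all t, and let E : ℝ → ℝ be differentiable with −E'(t) = (1/2)·⟨((d/dt)(I₀⁻¹))(Π(t)), Π(t)⟩ − ⟨Π(t), (d/dt)(I₀⁻¹(J₀))(t)⟩ + T₀'(t) for all t, where T₀(t) := K_int(t) − (1/2)·⟨I₀(t)⁻¹(J₀(t)), J₀(t)⟩. Then the function t ↦ E(t) + K(t) − ⟨Π(t), I₀(t)⁻¹(J₀(t))⟩ is constant, where K(t) := K_int(t) + (1/2)·⟨I₀(t)⁻¹(Π(t)), Π(t)⟩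 − (1/2)·⟨I₀(t)⁻¹(J₀(t)), J₀(t)⟩. -/
open Matrix

attribute [local instance] Matrix.linftyOpNormedAddCommGroup Matrix.linftyOpNormedRing
  Matrix.linftyOpNormedAlgebra

/-- Product rule for applying a curve of operators to a curve of vectors. -/
theorem DifferentiableAt.hasDerivAt_clm_apply {V : Type*} [NormedAddCommGroup V] [NormedSpace ℝ V]
    {A : ℝ → V →L[ℝ] V} {u : ℝ → V} {t : ℝ}
    (hA : DifferentiableAt ℝ A t) (hu : DifferentiableAt ℝ u t) :
    HasDerivAt (fun s => A s (u s)) (deriv A t (u t) + A t (deriv u t)) t :=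
  hA.hasDerivAt.clm_apply hu.hasDerivAt

/-- The product rule for operators on matrices, stated with the product topology on matrices, which
agrees with the norm topology only after unfolding instances. -/
theorem Matrix.hasDerivAt_clm_apply {n : ℕ}
    {A : ℝ → Matrix (Fin n) (Fin n) ℝ →L[ℝ] Matrix (Fin n) (Fin n) ℝ}
    {u : ℝ → Matrix (Fin n) (Fin n) ℝ} {t : ℝ}
    (hA : DifferentiableAt ℝ A t) (hu : DifferentiableAt ℝ u t) :
    HasDerivAt (fun s => A s (u s)) (deriv A t (u t) + A t (deriv u t)) t :=
  @DifferentiableAt.hasDerivAt_clm_apply (Matrix (Fin n) (Fin n) ℝ)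
    Matrix.linftyOpNormedAddCommGroup Matrix.linftyOpNormedSpace A u t hA hu

/-- Product rule for the trace pairing `⟨X, Y⟩ = trace (X * Y)`. -/
theorem hasDerivAt_trace_mul {n : ℕ} {X Y : ℝ → Matrix (Fin n) (Fin n) ℝ}
    {X' Y' : Matrix (Fin n) (Fin n) ℝ} {t : ℝ}
    (hX : HasDerivAt X X' t) (hY : HasDerivAt Y Y' t) :
    HasDerivAt (fun s => Matrix.trace (X s * Y s))
      (Matrix.trace (X' * Y t) + Matrix.trace (X t * Y')) t := by
  rw [← Matrix.trace_add]
  exact (LinearMap.toContinuousLinearMap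
    (Matrix.traceLinearMap (Fin n) ℝ ℝ)).hasFDerivAt.comp_hasDerivAt t (hX.mul hY)

/-- The inverse of a symmetric operator for the trace pairing is symmetric. -/
theorem trace_symm_mul_comm {n : ℕ}
    (A : Matrix (Fin n) (Fin n) ℝ ≃L[ℝ] Matrix (Fin n) (Fin n) ℝ)
    (hA : ∀ X Y : Matrix (Fin n) (Fin n) ℝ,
      Matrix.trace (A X * Y) = Matrix.trace (A Y * X))
    (X Y : Matrix (Fin n) (Fin n) ℝ) :
    Matrix.trace (A.symm X * Y) = Matrix.trace (A.symm Y * X) := by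
  have h := hA (A.symm Y) (A.symm X)
  rw [A.apply_symm_apply, A.apply_symm_apply] at h
  rw [Matrix.trace_mul_comm, h, Matrix.trace_mul_comm]

/-- A commutator `[X, Y]` is orthogonal to `Y` for the trace pairing. -/
theorem trace_commutator_mul_self {n : ℕ} (X Y : Matrix (Fin n) (Fin n) ℝ) :
    Matrix.trace ((X * Y - Y * X) * Y) = 0 := by
  rw [sub_mul, Matrix.trace_sub, Matrix.trace_mul_comm (X * Y) Y, Matrix.mul_assoc, sub_self]

/-- The momentum `E` conjugate to time: along solutions of the body momentum equation
`Π' = [Π, I₀⁻¹(Π − J₀)]`, with `E` solving the Hamiltonian equation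
`−E' = ½⟨(d/dt I₀⁻¹)(Π), Π⟩ − ⟨Π, d/dt(I₀⁻¹ J₀)⟩ + T₀'` where
`T₀ = K_int − ½⟨I₀⁻¹ J₀, J₀⟩`, the quantity `E + K − ⟨Π, I₀⁻¹ J₀⟩` is constant, where
`K = K_int + ½⟨I₀⁻¹ Π, Π⟩ − ½⟨I₀⁻¹ J₀, J₀⟩` is the kinetic energy and
`⟨X, Y⟩ = trace (X * Y)` is the trace pairing. -/
theorem energy_momentum_conjugate_to_time {n : ℕ} (hn : 1 ≤ n)
    (I₀ : ℝ → (Matrix (Fin n) (Fin n) ℝ ≃L[ℝ] Matrix (Fin n) (Fin n) ℝ))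
    (hI : Differentiable ℝ
      (fun t => (I₀ t : Matrix (Fin n) (Fin n) ℝ →L[ℝ] Matrix (Fin n) (Fin n) ℝ)))
    (hIinv : Differentiable ℝ
      (fun t => ((I₀ t).symm : Matrix (Fin n) (Fin n) ℝ →L[ℝ] Matrix (Fin n) (Fin n) ℝ)))
    (hsym : ∀ t (X Y : Matrix (Fin n) (Fin n) ℝ),
      Matrix.trace (I₀ t X * Y) = Matrix.trace (I₀ t Y * X))
    (J₀ : ℝ → Matrix (Fin n) (Fin n) ℝ) (hJ₀ : Differentiable ℝ J₀)
    (Kint : ℝ → ℝ) (hKint : Differentiable ℝ Kint)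
    (Mom : ℝ → Matrix (Fin n) (Fin n) ℝ) (hMom : Differentiable ℝ Mom)
    (hMom' : ∀ t, deriv Mom t
      = Mom t * (I₀ t).symm (Mom t - J₀ t) - (I₀ t).symm (Mom t - J₀ t) * Mom t)
    (T₀ : ℝ → ℝ)
    (hT₀ : ∀ t, T₀ t = Kint t - (1 / 2) * Matrix.trace ((I₀ t).symm (J₀ t) * J₀ t))
    (E : ℝ → ℝ) (hE : Differentiable ℝ E)
    (hE' : ∀ t, -deriv E t
      = (1 / 2) * Matrix.trace
          ((deriv (fun s => ((I₀ s).symm :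
              Matrix (Fin n) (Fin n) ℝ →L[ℝ] Matrix (Fin n) (Fin n) ℝ)) t) (Mom t) * Mom t)
        - Matrix.trace (Mom t * deriv (fun s => (I₀ s).symm (J₀ s)) t)
        + deriv T₀ t)
    (K : ℝ → ℝ)
    (hK : ∀ t, K t = Kint t + (1 / 2) * Matrix.trace ((I₀ t).symm (Mom t) * Mom t)
        - (1 / 2) * Matrix.trace ((I₀ t).symm (J₀ t) * J₀ t)) :
    ∀ s t, E s + K s - Matrix.trace (Mom s * (I₀ s).symm (J₀ s))
      = E t + K t - Matrix.trace (Mom t * (I₀ t).symm (J₀ t)) := by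
  have hderiv : ∀ t, HasDerivAt
      (fun s => E s + K s - Matrix.trace (Mom s * (I₀ s).symm (J₀ s))) 0 t := by
    intro t
    have hM : HasDerivAt Mom (deriv Mom t) t := (hMom t).hasDerivAt
    have hAM := Matrix.hasDerivAt_clm_apply (hIinv t) (hMom t)
    have hAJ : HasDerivAt (fun s => (I₀ s).symm (J₀ s))
        (deriv (fun s => (I₀ s).symm (J₀ s)) t) t :=
      (Matrix.hasDerivAt_clm_apply (hIinv t) (hJ₀ t)).differentiableAt.hasDerivAt
    have hT : DifferentiableAt ℝ T₀ t := by
      rw [funext hT₀]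
      exact ((hKint t).hasDerivAt.sub
        ((hasDerivAt_trace_mul hAJ (hJ₀ t).hasDerivAt).const_mul (1 / 2))).differentiableAt
    have hKT : K = fun s => T₀ s + (1 / 2) * Matrix.trace ((I₀ s).symm (Mom s) * Mom s) := by
      funext s
      rw [hK, hT₀]
      ring
    rw [hKT]
    refine (((hE t).hasDerivAt.add (hT.hasDerivAt.add
      ((hasDerivAt_trace_mul hAM hM).const_mul (1 / 2)))).sub
      (hasDerivAt_trace_mul hM hAJ)).congr_deriv ?_
    have horth : Matrix.trace (deriv Mom t * (I₀ t).symm (Mom t - J₀ t)) = 0 := by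
      rw [hMom' t]
      exact trace_commutator_mul_self _ _
    rw [map_sub, mul_sub, Matrix.trace_sub] at horth
    have hs := trace_symm_mul_comm (I₀ t) (hsym t) (deriv Mom t) (Mom t)
    have hc := Matrix.trace_mul_comm (deriv Mom t) ((I₀ t).symm (Mom t))
    have he := hE' t
    simp only [add_mul, Matrix.trace_add, ContinuousLinearEquiv.coe_coe] at he ⊢
    linarith
  intro s t
  exact is_const_of_deriv_eq_zero (fun u => (hderiv u).differentiableAt)
    (fun u => (hderiv u).deriv) s t
end
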